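/- Let K ⊂ ℝ² be a Borel set with Hausdorff dimension d > 1 and 0 < m_d(K) < ∞, and suppose there exists b > 0 such that m_d(K ∩ B(x,r)) ≤ b r^d for all x ∈ K and all r > 0, where B(x,r) is the open ball of center x and radius r. For θ ∈ ℝ let μ_θ = (proj_θ)_*(m_d ↾ K). Then for Lebesgue-almost every θ, μ_θ is absolutely continuous with respect to the one-dimensional Lebesgue measure m on L_θ and its Radon–Nikodym derivative dμ_θ/dm belongs to L²(m). -/

import Mathlib

open MeasureTheory

open Filter Metric Set Topology
open scoped ENNReal

/-! If the lower density of a finite measure `ν` with respect to Lebesgue measure `m` is finite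
`ν`-almost everywhere, then `ν ≪ m`, and the `ν`-integral of the lower density is the squared `L²`
norm of `dν/dm`. For the projections of a planar measure `μ`, Fatou's lemma and Fubini's theorem
bound the average of these integrals over `θ` by a multiple of the double integral of
`1 / |x - y|` against `μ × μ`, because the set of `θ` in a bounded interval for which the
projections of `x` and `y` are `r`-close has length `O(r / |x - y|)`. The double integral is finite
when balls of radius `r` have mass `O(r ^ d)` with `d > 1`. -/

section LowerDensity

variable {Y : Type*} [MetricSpace Y] [MeasurableSpace Y] {ν m : Measure Y} {r : ℕ → ℝ}

/-- The lower density at `y` of the measure `ν` with respect to the reference measure `m`, along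
the sequence `r` of radii. It is used with radii tending to `0`; a sequence keeps it measurable
as a function of `y`. -/
noncomputable def lowerDensity (ν m : Measure Y) (r : ℕ → ℝ) (y : Y) : ℝ≥0∞ :=
  liminf (fun n => ν (closedBall y (r n)) / m (closedBall y (r n))) atTop

lemma measurable_measure_closedBall [OpensMeasurableSpace Y] [SecondCountableTopology Y]
    (ν : Measure Y) [SFinite ν] (ρ : ℝ) : Measurable fun y => ν (closedBall y ρ) :=
  measurable_measure_prodMk_left (s := {p : Y × Y | dist p.2 p.1 ≤ ρ})
    (measurableSet_le (by fun_prop) measurable_const)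

lemma measurable_lowerDensity [OpensMeasurableSpace Y] [SecondCountableTopology Y]
    [SFinite ν] [SFinite m] : Measurable (lowerDensity ν m r) :=
  .liminf fun n =>
    (measurable_measure_closedBall ν (r n)).div (measurable_measure_closedBall m (r n))

variable [BorelSpace Y] [SecondCountableTopology Y] [HasBesicovitchCovering Y]
  [IsLocallyFiniteMeasure m]

lemma measure_le_mul_of_lowerDensity_lt [SFinite ν] (hr : Tendsto r atTop (𝓝[>] 0)) {s : Set Y}
    {c : ℝ≥0∞} (hc : c ≠ ⊤) (hs : ∀ y ∈ s, lowerDensity ν m r y < c) : ν s ≤ c * m s := by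
  lift c to NNReal using hc
  -- The covering is made of balls exhausting `ν` rather than `m`, so `ν ≪ m` is not presupposed.
  refine (Besicovitch.vitaliFamily ν).measure_le_of_frequently_le (c • m) .rfl s fun y hy => ?_
  have hfreq : ∃ᶠ n in atTop, ν (closedBall y (r n)) ≤ (c • m) (closedBall y (r n)) := by
    refine (frequently_lt_of_liminf_lt (h := hs y hy)).mono fun n hn => ?_
    have hc0 : (c : ℝ≥0∞) ≠ 0 := hn.ne_bot
    exact (ENNReal.div_le_iff_le_mul (.inr ENNReal.coe_ne_top) (.inr hc0)).1 hn.le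
  exact ((Besicovitch.tendsto_filterAt ν y).comp hr).frequently hfreq

lemma absolutelyContinuous_of_lowerDensity_lt_top [SFinite ν] (hr : Tendsto r atTop (𝓝[>] 0))
    (h : ∀ᵐ y ∂ν, lowerDensity ν m r y < ⊤) : ν ≪ m := by
  intro s hs
  have hcover : s ⊆ {y | ¬ lowerDensity ν m r y < ⊤} ∪
      ⋃ k : ℕ, {y ∈ s | lowerDensity ν m r y < k} := by
    intro y hy
    by_cases hfin : lowerDensity ν m r y < ⊤
    · obtain ⟨k, hk⟩ := ENNReal.exists_nat_gt hfin.ne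
      exact .inr (mem_iUnion.2 ⟨k, hy, hk⟩)
    · exact .inl hfin
  refine measure_mono_null hcover <|
    measure_union_null (ae_iff.1 h) (measure_iUnion_null fun k => ?_)
  have hle := measure_le_mul_of_lowerDensity_lt (ν := ν) (m := m) hr (ENNReal.natCast_ne_top k)
    fun y (hy : y ∈ {y ∈ s | lowerDensity ν m r y < k}) => hy.2
  rwa [measure_mono_null (sep_subset s _) hs, mul_zero, nonpos_iff_eq_zero] at hle

lemma ae_lowerDensity_eq_rnDeriv [IsLocallyFiniteMeasure ν] (hr : Tendsto r atTop (𝓝[>] 0)) :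
    lowerDensity ν m r =ᵐ[m] ν.rnDeriv m := by
  filter_upwards [Besicovitch.ae_tendsto_rnDeriv ν m] with y hy
  exact (hy.comp hr).liminf_eq

lemma lintegral_rnDeriv_sq_eq_lintegral_lowerDensity [IsLocallyFiniteMeasure ν] (hν : ν ≪ m)
    (hr : Tendsto r atTop (𝓝[>] 0)) :
    ∫⁻ y, ν.rnDeriv m y ^ 2 ∂m = ∫⁻ y, lowerDensity ν m r y ∂ν :=
  calc ∫⁻ y, ν.rnDeriv m y ^ 2 ∂m
      = ∫⁻ y, ν.rnDeriv m y * ν.rnDeriv m y ∂m := by simp only [sq]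
    _ = ∫⁻ y, ν.rnDeriv m y ∂ν :=
      lintegral_rnDeriv_mul hν (Measure.measurable_rnDeriv ν m).aemeasurable
    _ = ∫⁻ y, lowerDensity ν m r y ∂ν :=
      lintegral_congr_ae (hν.ae_eq (ae_lowerDensity_eq_rnDeriv hr)).symm

theorem absolutelyContinuous_and_lintegral_rnDeriv_sq_lt_top [IsLocallyFiniteMeasure ν]
    (hr : Tendsto r atTop (𝓝[>] 0)) (h : ∫⁻ y, lowerDensity ν m r y ∂ν < ⊤) :
    ν ≪ m ∧ ∫⁻ y, ν.rnDeriv m y ^ 2 ∂m < ⊤ := by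
  have hν : ν ≪ m :=
    absolutelyContinuous_of_lowerDensity_lt_top hr (ae_lt_top measurable_lowerDensity h.ne)
  exact ⟨hν, (lintegral_rnDeriv_sq_eq_lintegral_lowerDensity hν hr).trans_lt h⟩

end LowerDensity

section Transversality

variable {Θ X : Type*} [MeasurableSpace Θ] [MeasurableSpace X]

lemma lintegral_measure_prodMk_preimage (lam : Measure Θ) [SFinite lam] (μ : Measure X)
    [SFinite μ] {S : Set ((Θ × X) × X)} (hS : MeasurableSet S) :
    ∫⁻ p, μ (Prod.mk p ⁻¹' S) ∂(lam.prod μ) =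
      ∫⁻ x, ∫⁻ y, lam {θ | ((θ, x), y) ∈ S} ∂μ ∂μ := by
  rw [lintegral_prod_symm' _ (measurable_measure_prodMk_left hS)]
  refine lintegral_congr fun x => ?_
  have hSx : MeasurableSet {q : Θ × X | ((q.1, x), q.2) ∈ S} := hS.preimage (by fun_prop)
  exact (Measure.prod_apply hSx).symm.trans (Measure.prod_apply_symm hSx)

variable {Y : Type*} [PseudoMetricSpace Y] [MeasurableSpace Y] [OpensMeasurableSpace Y]

lemma measurableSet_dist_le [SecondCountableTopology Y] {P : Θ → X → Y}
    (hP : Measurable (Function.uncurry P)) (ρ : ℝ) :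
    MeasurableSet {q : (Θ × X) × X | dist (P q.1.1 q.1.2) (P q.1.1 q.2) ≤ ρ} :=
  measurableSet_le
    ((hP.comp measurable_fst).dist (hP.comp (measurable_fst.fst.prodMk measurable_snd)))
    measurable_const

lemma map_closedBall_eq_measure_prodMk_preimage {μ : Measure X} {P : Θ → X → Y}
    (hP : Measurable (Function.uncurry P)) (ρ : ℝ) (p : Θ × X) :
    μ.map (P p.1) (closedBall (P p.1 p.2) ρ) =
      μ (Prod.mk p ⁻¹' {q | dist (P q.1.1 q.1.2) (P q.1.1 q.2) ≤ ρ}) := by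
  rw [Measure.map_apply hP.of_uncurry_left measurableSet_closedBall]
  simp only [preimage, mem_closedBall', mem_ofPred_eq]

variable {E : Type*} [NormedAddCommGroup E] [NormedSpace ℝ E] [FiniteDimensional ℝ E]
  [MeasurableSpace E] [BorelSpace E] {lam : Measure Θ} [SFinite lam] {μ : Measure X} {P : Θ → X → E}
  {k : X → X → ℝ≥0∞}

lemma measurable_map_closedBall_div [SFinite μ] (m : Measure E) [m.IsAddHaarMeasure]
    (hP : Measurable (Function.uncurry P)) (ρ : ℝ) : Measurable fun p : Θ × X =>
      μ.map (P p.1) (closedBall (P p.1 p.2) ρ) / m (closedBall (P p.1 p.2) ρ) := by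
  simp only [map_closedBall_eq_measure_prodMk_preimage hP, Measure.addHaar_closedBall_center]
  exact (measurable_measure_prodMk_left (measurableSet_dist_le hP ρ)).div_const _

lemma lintegral_map_closedBall_div_le [SFinite μ] (m : Measure E) [m.IsAddHaarMeasure]
    (hP : Measurable (Function.uncurry P)) {ρ : ℝ} (hρ : 0 < ρ)
    (hk : ∀ x y, lam {θ | dist (P θ x) (P θ y) ≤ ρ} ≤ m (closedBall 0 ρ) * k x y) :
    ∫⁻ p, μ.map (P p.1) (closedBall (P p.1 p.2) ρ) / m (closedBall (P p.1 p.2) ρ) ∂(lam.prod μ)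
      ≤ ∫⁻ x, ∫⁻ y, k x y ∂μ ∂μ := by
  have hc0 : m (closedBall 0 ρ) ≠ 0 := (measure_closedBall_pos m 0 hρ).ne'
  have hctop : m (closedBall 0 ρ) ≠ ⊤ := measure_closedBall_lt_top.ne
  simp only [map_closedBall_eq_measure_prodMk_preimage hP, Measure.addHaar_closedBall_center,
    div_eq_mul_inv]
  rw [lintegral_mul_const' _ _ (ENNReal.inv_ne_top.2 hc0), ← div_eq_mul_inv,
    lintegral_measure_prodMk_preimage lam μ (measurableSet_dist_le hP ρ)]
  refine ENNReal.div_le_of_le_mul' ?_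
  calc ∫⁻ x, ∫⁻ y, lam {θ | dist (P θ x) (P θ y) ≤ ρ} ∂μ ∂μ
      ≤ ∫⁻ x, ∫⁻ y, m (closedBall 0 ρ) * k x y ∂μ ∂μ :=
        lintegral_mono fun x => lintegral_mono fun y => hk x y
    _ = m (closedBall 0 ρ) * ∫⁻ x, ∫⁻ y, k x y ∂μ ∂μ := by
        simp only [lintegral_const_mul' _ _ hctop]

lemma lintegral_lowerDensity_map_le [SFinite μ] (m : Measure E) [m.IsAddHaarMeasure]
    (hP : Measurable (Function.uncurry P)) {r : ℕ → ℝ} (hr : ∀ n, 0 < r n)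
    (hk : ∀ ρ > 0, ∀ x y, lam {θ | dist (P θ x) (P θ y) ≤ ρ} ≤ m (closedBall 0 ρ) * k x y) :
    ∫⁻ p, lowerDensity (μ.map (P p.1)) m r (P p.1 p.2) ∂(lam.prod μ)
      ≤ ∫⁻ x, ∫⁻ y, k x y ∂μ ∂μ :=
  (lintegral_liminf_le fun n => measurable_map_closedBall_div m hP (r n)).trans <|
    liminf_le_of_frequently_le' <| .of_forall fun n =>
      lintegral_map_closedBall_div_le m hP (hr n) (hk (r n) (hr n))

theorem ae_absolutelyContinuous_map_of_transversality [IsFiniteMeasure μ] (m : Measure E)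
    [m.IsAddHaarMeasure] (hP : Measurable (Function.uncurry P))
    (hk : ∀ ρ > 0, ∀ x y, lam {θ | dist (P θ x) (P θ y) ≤ ρ} ≤ m (closedBall 0 ρ) * k x y)
    (henergy : ∫⁻ x, ∫⁻ y, k x y ∂μ ∂μ < ⊤) :
    ∀ᵐ θ ∂lam, μ.map (P θ) ≪ m ∧ ∫⁻ t, (μ.map (P θ)).rnDeriv m t ^ 2 ∂m < ⊤ := by
  obtain ⟨r, -, hr, hr0⟩ := exists_seq_strictAnti_tendsto (0 : ℝ)
  have hr0' : Tendsto r atTop (𝓝[>] 0) := tendsto_nhdsWithin_iff.2 ⟨hr0, .of_forall hr⟩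
  have hmeas : Measurable fun p : Θ × X => lowerDensity (μ.map (P p.1)) m r (P p.1 p.2) :=
    .liminf fun n => measurable_map_closedBall_div m hP (r n)
  have hfin := (lintegral_lowerDensity_map_le m hP hr hk).trans_lt henergy
  rw [lintegral_prod _ hmeas.aemeasurable] at hfin
  filter_upwards [ae_lt_top hmeas.lintegral_prod_right' hfin.ne] with θ hθ
  have : IsFiniteMeasure (μ.map (P θ)) := Measure.isFiniteMeasure_map μ _
  refine absolutelyContinuous_and_lintegral_rnDeriv_sq_lt_top hr0' ?_
  rwa [lintegral_map measurable_lowerDensity hP.of_uncurry_left]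

end Transversality

section RieszEnergy

variable {X : Type*} [PseudoMetricSpace X] {s : ℝ}

lemma edist_rpow_neg_le_one_add_tsum_indicator_ball (hs : 0 ≤ s) (x y : X) :
    edist x y ^ (-s) ≤ 1 + ∑' n : ℕ,
      (ball x (2 / 2 ^ n)).indicator (fun _ => ENNReal.ofReal ((2 ^ (n + 1)) ^ s)) y := by
  rcases dist_nonneg.eq_or_lt' (a := dist x y) with hxy | hxy
  · have hone (n : ℕ) : 1 ≤ (ball x (2 / 2 ^ n)).indicator
        (fun _ => ENNReal.ofReal ((2 ^ (n + 1)) ^ s)) y := by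
      rw [indicator_of_mem (mem_ball'.2 (by rw [hxy]; positivity)), ENNReal.one_le_ofReal]
      exact Real.one_le_rpow (one_le_pow₀ one_le_two) hs
    have htop := ENNReal.tsum_le_tsum hone
    rw [ENNReal.tsum_const_eq_top_of_ne_zero one_ne_zero, top_le_iff] at htop
    rw [htop, add_top]
    exact le_top
  rw [edist_dist, ENNReal.ofReal_rpow_of_pos hxy]
  rcases le_total 1 (dist x y) with hfar | hnear
  · refine le_add_right (ENNReal.ofReal_le_one.2 ?_)
    exact Real.rpow_le_one_of_one_le_of_nonpos hfar (neg_nonpos.2 hs)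
  · obtain ⟨n, hlower, hupper⟩ := exists_nat_pow_near ((one_le_inv₀ hxy).2 hnear) one_lt_two
    have hmem : y ∈ ball x (2 / 2 ^ n) := by
      rw [mem_ball']
      calc dist x y ≤ 1 / 2 ^ n := one_div (2 ^ n : ℝ) ▸ (le_inv_comm₀ (by positivity) hxy).1 hlower
        _ < 2 / 2 ^ n := by gcongr; exact one_lt_two
    refine le_add_left (le_trans ?_ (ENNReal.le_tsum n))
    rw [indicator_of_mem hmem, Real.rpow_neg hxy.le, ← Real.inv_rpow hxy.le]
    gcongr

variable [MeasurableSpace X] {μ : Measure X} {d b : ℝ}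

/-- The Riesz `s`-energy of a measure `μ`, the double integral of `1 / dist x y ^ s`. The kernel
is extended-real valued, so that for `s > 0` it is infinite on the diagonal. -/
noncomputable def rieszEnergy (s : ℝ) (μ : Measure X) : ℝ≥0∞ :=
  ∫⁻ x, ∫⁻ y, edist x y ^ (-s) ∂μ ∂μ

lemma lintegral_edist_rpow_neg_le [OpensMeasurableSpace X] (hs : 0 ≤ s) {x : X}
    (h : ∀ ρ : ℝ, 0 < ρ → μ (ball x ρ) ≤ ENNReal.ofReal (b * ρ ^ d)) :
    ∫⁻ y, edist x y ^ (-s) ∂μ ≤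
      μ univ + ∑' n : ℕ, ENNReal.ofReal (b * 2 ^ (s + d) * (2 ^ (s - d)) ^ n) := by
  refine (lintegral_mono (edist_rpow_neg_le_one_add_tsum_indicator_ball hs x)).trans ?_
  rw [lintegral_add_left measurable_const, lintegral_one, lintegral_tsum fun n =>
    (measurable_const.indicator measurableSet_ball).aemeasurable]
  gcongr with n
  have hscale : ((2 : ℝ) ^ (n + 1)) ^ s * (b * (2 / 2 ^ n) ^ d) =
      b * 2 ^ (s + d) * (2 ^ (s - d)) ^ n := by
    rw [pow_succ, Real.mul_rpow (by positivity) two_pos.le,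
      Real.div_rpow two_pos.le (by positivity), Real.rpow_add two_pos,
      Real.rpow_pow_comm two_pos.le, Real.rpow_sub (by positivity)]
    ring
  calc ∫⁻ y, (ball x (2 / 2 ^ n)).indicator (fun _ => ENNReal.ofReal ((2 ^ (n + 1)) ^ s)) y ∂μ
      = ENNReal.ofReal ((2 ^ (n + 1)) ^ s) * μ (ball x (2 / 2 ^ n)) :=
        lintegral_indicator_const measurableSet_ball _
    _ ≤ ENNReal.ofReal ((2 ^ (n + 1)) ^ s) * ENNReal.ofReal (b * (2 / 2 ^ n) ^ d) := by
        gcongr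
        exact h _ (by positivity)
    _ = ENNReal.ofReal (b * 2 ^ (s + d) * (2 ^ (s - d)) ^ n) := by
        rw [← ENNReal.ofReal_mul (by positivity), hscale]

theorem rieszEnergy_lt_top [OpensMeasurableSpace X] [IsFiniteMeasure μ] (hs : 0 ≤ s) (hsd : s < d)
    (h : ∀ᵐ x ∂μ, ∀ ρ : ℝ, 0 < ρ → μ (ball x ρ) ≤ ENNReal.ofReal (b * ρ ^ d)) :
    rieszEnergy s μ < ⊤ := by
  have hratio : (2 : ℝ) ^ (s - d) < 1 :=
    Real.rpow_lt_one_of_one_lt_of_neg one_lt_two (sub_neg.2 hsd)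
  have hsummable : Summable fun n : ℕ => b * 2 ^ (s + d) * ((2 : ℝ) ^ (s - d)) ^ n :=
    (summable_geometric_of_lt_one (by positivity) hratio).mul_left _
  refine (lintegral_mono_ae (h.mono fun x hx => lintegral_edist_rpow_neg_le hs hx)).trans_lt ?_
  rw [lintegral_const]
  exact ENNReal.mul_lt_top
    (ENNReal.add_lt_top.2 ⟨measure_lt_top μ univ, hsummable.tsum_ofReal_lt_top⟩)
    (measure_lt_top μ univ)

theorem rieszEnergy_restrict_lt_top [OpensMeasurableSpace X] {K : Set X}
    [IsFiniteMeasure (μ.restrict K)] (hs : 0 ≤ s) (hsd : s < d) (hK : MeasurableSet K)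
    (h : ∀ x ∈ K, ∀ ρ : ℝ, 0 < ρ → μ (K ∩ ball x ρ) ≤ ENNReal.ofReal (b * ρ ^ d)) :
    rieszEnergy s (μ.restrict K) < ⊤ := by
  refine rieszEnergy_lt_top (b := b) hs hsd ?_
  filter_upwards [ae_restrict_mem hK] with x hx ρ hρ
  rw [Measure.restrict_apply measurableSet_ball, inter_comm]
  exact h x hx ρ hρ

end RieszEnergy

section PlaneProjection

/-- The orthogonal projection of the plane to the line through the origin in direction
`(cos θ, sin θ)`, in the arclength coordinate of that line. -/
noncomputable def planeProj (θ : ℝ) (x : EuclideanSpace ℝ (Fin 2)) : ℝ :=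
  x 0 * Real.cos θ + x 1 * Real.sin θ

lemma measurable_uncurry_planeProj : Measurable (Function.uncurry planeProj) := by
  unfold Function.uncurry planeProj
  fun_prop

lemma planeProj_sub (θ : ℝ) (x y : EuclideanSpace ℝ (Fin 2)) :
    planeProj θ (x - y) = planeProj θ x - planeProj θ y := by
  simp only [planeProj, PiLp.sub_apply]
  ring

lemma norm_mul_abs_sin_sub_le (θ φ : ℝ) (z : EuclideanSpace ℝ (Fin 2)) :
    ‖z‖ * |Real.sin (θ - φ)| ≤ |planeProj θ z| + |planeProj φ z| := by
  let normal (α : ℝ) : EuclideanSpace ℝ (Fin 2) := !₂[Real.sin α, -Real.cos α]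
  have hnormal (α : ℝ) : ‖normal α‖ = 1 := by
    simp [normal, EuclideanSpace.norm_eq]
  have hz : Real.sin (θ - φ) • z = planeProj φ z • normal θ - planeProj θ z • normal φ := by
    ext i
    fin_cases i <;> simp [normal, planeProj, Real.sin_sub] <;> ring
  calc ‖z‖ * |Real.sin (θ - φ)|
      = ‖planeProj φ z • normal θ - planeProj θ z • normal φ‖ := by
        rw [← hz, norm_smul, Real.norm_eq_abs, mul_comm]
    _ ≤ ‖planeProj φ z • normal θ‖ + ‖planeProj θ z • normal φ‖ := norm_sub_le _ _
    _ = |planeProj θ z| + |planeProj φ z| := by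
        simp only [norm_smul, hnormal, mul_one, Real.norm_eq_abs, add_comm]

lemma abs_sub_mul_dist_le {x y : EuclideanSpace ℝ (Fin 2)} {θ φ ρ : ℝ}
    (hθφ : |θ - φ| ≤ Real.pi / 2) (hθ : dist (planeProj θ x) (planeProj θ y) ≤ ρ)
    (hφ : dist (planeProj φ x) (planeProj φ y) ≤ ρ) : |θ - φ| * dist x y ≤ Real.pi * ρ := by
  have hproj := norm_mul_abs_sin_sub_le θ φ (x - y)
  simp only [planeProj_sub, ← Real.dist_eq, ← dist_eq_norm] at hproj
  have hsin : 2 * |θ - φ| ≤ Real.pi * |Real.sin (θ - φ)| := by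
    have := Real.mul_abs_le_abs_sin hθφ
    rwa [div_mul_eq_mul_div, div_le_iff₀' Real.pi_pos] at this
  have hdouble : 2 * |θ - φ| * dist x y ≤ Real.pi * (2 * ρ) :=
    calc 2 * |θ - φ| * dist x y ≤ Real.pi * |Real.sin (θ - φ)| * dist x y := by gcongr
      _ = Real.pi * (dist x y * |Real.sin (θ - φ)|) := by ring
      _ ≤ Real.pi * (2 * ρ) := mul_le_mul_of_nonneg_left (by linarith) Real.pi_pos.le
  linarith

lemma volume_dist_planeProj_le {I : Set ℝ} (hI : ∀ θ ∈ I, ∀ φ ∈ I, |θ - φ| ≤ Real.pi / 2)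
    {ρ : ℝ} (hρ : 0 < ρ) (x y : EuclideanSpace ℝ (Fin 2)) :
    volume ({θ | dist (planeProj θ x) (planeProj θ y) ≤ ρ} ∩ I) ≤
      ENNReal.ofReal (Real.pi * ρ) * (edist x y)⁻¹ := by
  rcases eq_or_ne x y with rfl | hxy
  · rw [edist_self, ENNReal.inv_zero, ENNReal.mul_top (by simpa using by positivity)]
    exact le_top
  refine (Real.volume_le_diam _).trans (ediam_le ?_)
  rintro θ ⟨hθ, hθI⟩ φ ⟨hφ, hφI⟩
  rw [← div_eq_mul_inv,
    ENNReal.le_div_iff_mul_le (.inl (edist_pos.2 hxy).ne') (.inl (edist_ne_top x y)),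
    edist_dist, edist_dist, Real.dist_eq, ← ENNReal.ofReal_mul (abs_nonneg _)]
  exact ENNReal.ofReal_le_ofReal (abs_sub_mul_dist_le (hI θ hθI φ hφI) hθ hφ)

lemma ae_restrict_absolutelyContinuous_map_planeProj {μ : Measure (EuclideanSpace ℝ (Fin 2))}
    [IsFiniteMeasure μ] (hμ : rieszEnergy 1 μ < ⊤) {I : Set ℝ}
    (hI : ∀ θ ∈ I, ∀ φ ∈ I, |θ - φ| ≤ Real.pi / 2) :
    ∀ᵐ θ ∂volume.restrict I, μ.map (planeProj θ) ≪ volume ∧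
      ∫⁻ t, (μ.map (planeProj θ)).rnDeriv volume t ^ 2 < ⊤ := by
  refine ae_absolutelyContinuous_map_of_transversality
    (k := fun x y => ENNReal.ofReal (Real.pi / 2) * (edist x y)⁻¹) volume
    measurable_uncurry_planeProj (fun ρ hρ x y => ?_) ?_
  · have hmeas : MeasurableSet {θ | dist (planeProj θ x) (planeProj θ y) ≤ ρ} :=
      measurableSet_le (measurable_uncurry_planeProj.of_uncurry_right.dist
        measurable_uncurry_planeProj.of_uncurry_right) measurable_const
    rw [Measure.restrict_apply hmeas]
    refine (volume_dist_planeProj_le hI hρ x y).trans_eq ?_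
    rw [Real.volume_closedBall, ← mul_assoc, ← ENNReal.ofReal_mul (by positivity)]
    congr 2
    ring
  · simp only [rieszEnergy, ENNReal.rpow_neg_one] at hμ
    simp only [lintegral_const_mul' _ _ ENNReal.ofReal_ne_top]
    exact ENNReal.mul_lt_top ENNReal.ofReal_lt_top hμ

theorem stmt_7_general (μ : Measure (EuclideanSpace ℝ (Fin 2))) [IsFiniteMeasure μ]
    (hμ : rieszEnergy 1 μ < ⊤) :
    ∀ᵐ θ ∂(volume : Measure ℝ), μ.map (planeProj θ) ≪ volume ∧
      ∫⁻ t, (μ.map (planeProj θ)).rnDeriv volume t ^ 2 < ⊤ := by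
  have hunit (k : ℤ) : ∀ᵐ θ ∂volume.restrict (Icc (k : ℝ) (k + 1)), μ.map (planeProj θ) ≪ volume ∧
      ∫⁻ t, (μ.map (planeProj θ)).rnDeriv volume t ^ 2 < ⊤ :=
    ae_restrict_absolutelyContinuous_map_planeProj hμ fun θ hθ φ hφ => abs_le.2
      ⟨by linarith [hθ.1, hφ.2, Real.pi_gt_three], by linarith [hθ.2, hφ.1, Real.pi_gt_three]⟩
  have hunion := (ae_restrict_iUnion_iff _ _).2 hunit
  rwa [iUnion_Icc_intCast, Measure.restrict_univ] at hunion

end PlaneProjection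

/-- Theorem 1.2 of [Lima-Moreira], corrected: Let K ⊂ ℝ² be a Borel set
with Hausdorff dimension d > 1 and 0 < m_d(K) < ∞, and suppose there is b > 0 with
m_d(K ∩ B(x,r)) ≤ b r^d for all x ∈ K and r > 0 (B(x,r) the open ball). For θ ∈ ℝ let
μ_θ = (proj_θ)_*(m_d ↾ K). Then for Lebesgue-almost every θ, μ_θ is absolutely
continuous with respect to 1-dimensional Lebesgue measure m on L_θ, and its
Radon–Nikodym derivative dμ_θ/dm is in L²(m). The line L_θ is identified isometrically
with ℝ via t ↦ t • (cos θ, sin θ), so proj_θ becomes x ↦ x₀ cos θ + x₁ sin θ and the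
arclength (Lebesgue) measure on L_θ becomes Lebesgue measure on ℝ. -/
theorem stmt_7 (K : Set (EuclideanSpace ℝ (Fin 2))) (hK : MeasurableSet K)
    (d : ℝ) (hd : 1 < d) (hdim : dimH K = ENNReal.ofReal d)
    (hpos : 0 < μH[d] K) (hfin : μH[d] K < ⊤)
    (b : ℝ) (hb : 0 < b)
    (hreg : ∀ x ∈ K, ∀ r : ℝ, 0 < r →
      μH[d] (K ∩ Metric.ball x r) ≤ ENNReal.ofReal (b * r ^ d)) :
    ∀ᵐ θ ∂(volume : Measure ℝ),
      Measure.map (fun x : EuclideanSpace ℝ (Fin 2) =>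
          x 0 * Real.cos θ + x 1 * Real.sin θ) (μH[d].restrict K)
        ≪ (volume : Measure ℝ) ∧
      ∫⁻ t, ((Measure.map (fun x : EuclideanSpace ℝ (Fin 2) =>
          x 0 * Real.cos θ + x 1 * Real.sin θ) (μH[d].restrict K)).rnDeriv
            (volume : Measure ℝ) t) ^ 2 ∂(volume : Measure ℝ) < ⊤ := by
  have : IsFiniteMeasure (μH[d].restrict K) := ⟨by rwa [Measure.restrict_apply_univ]⟩
  exact stmt_7_general _ (rieszEnergy_restrict_lt_top zero_le_one hd hK hreg)
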